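/- Let n ≥ 2 and for each k ≥ 2 let A_k be the set of pairs (P, S) where P is a connected compatible partition of the crown poset C_{2n}, S is a subset of the set of blocks of P having odd cardinality, and |P| − |S| = k − 2. Then for every k ≥ 3, the number of connected compatible partitions of Ĉ_{2n} with exactly k blocks equals |A_k|, and the number of connected compatible partitions of Ĉ_{2n} with exactly 2 blocks equals |A_2| + 2. -/

import Mathlib

/-- Cover relations of the crown poset `C_{2n}` on `{1,…,2n}`:
`2i−1 ≺ 2i` for `1 ≤ i ≤ n`, `2i+1 ≺ 2i` for `1 ≤ i ≤ n−1`, and `1 ≺ 2n`. -/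
def crownCover (n x y : ℕ) : Prop :=
  Odd x ∧ Even y ∧ (y = x + 1 ∨ x = y + 1 ∨ (x = 1 ∧ y = 2 * n))

/-- The order relation of the crown poset `C_{2n}` (restricted to `{1,…,2n}`). -/
def crownLe (n x y : ℕ) : Prop := x = y ∨ crownCover n x y

/-- The ground set `{1,…,2n}` of the crown poset. -/
def crownGround (n : ℕ) : Finset ℕ := Finset.Icc 1 (2 * n)

/-- `π` is a partition of the finite set `s`: blocks are nonempty subsets of `s`
and each element of `s` lies in exactly one block. -/
def IsPartitionOn (s : Finset ℕ) (π : Finset (Finset ℕ)) : Prop :=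
  (∀ B ∈ π, B.Nonempty) ∧ (∀ B ∈ π, B ⊆ s) ∧ ∀ x ∈ s, ∃! B, B ∈ π ∧ x ∈ B

/-- A block is connected if it induces a connected subgraph of `G`. -/
def BlockConnected (G : SimpleGraph ℕ) (B : Finset ℕ) : Prop :=
  (G.induce (B : Set ℕ)).Connected

/-- A connected partition of `s` with respect to the graph `G`. -/
def IsConnectedPartition (s : Finset ℕ) (G : SimpleGraph ℕ) (π : Finset (Finset ℕ)) : Prop :=
  IsPartitionOn s π ∧ ∀ B ∈ π, BlockConnected G B

/-- The comparability graph of the relation `le`. -/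
def compGraph (le : ℕ → ℕ → Prop) : SimpleGraph ℕ := SimpleGraph.fromRel le

/-- The relation `B ≤_π B'` on blocks of `π`: both are blocks and there are
`x ∈ B`, `y ∈ B'` with `x ≤ y`. -/
def blockRel (le : ℕ → ℕ → Prop) (π : Finset (Finset ℕ)) (B B' : Finset ℕ) : Prop :=
  B ∈ π ∧ B' ∈ π ∧ ∃ x ∈ B, ∃ y ∈ B', le x y

/-- `π` is compatible: the transitive closure of `≤_π` is antisymmetric. -/
def IsCompatible (le : ℕ → ℕ → Prop) (π : Finset (Finset ℕ)) : Prop :=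
  ∀ B ∈ π, ∀ B' ∈ π, Relation.TransGen (blockRel le π) B B' →
    Relation.TransGen (blockRel le π) B' B → B = B'

/-- A connected and compatible partition (CCP) of the poset with ground set `s`
and order relation `le`. -/
def IsCCP (s : Finset ℕ) (le : ℕ → ℕ → Prop) (π : Finset (Finset ℕ)) : Prop :=
  IsConnectedPartition s (compGraph le) π ∧ IsCompatible le π

/-- The order relation of `Ĉ_{2n}`, the crown poset with a minimum `0̂ = 0` and a
maximum `1̂ = 2n+1` adjoined; ground set `{0,1,…,2n+1}`. -/
def hatCrownLe (n x y : ℕ) : Prop :=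
  x = y ∨ x = 0 ∨ y = 2 * n + 1 ∨
    (x ∈ crownGround n ∧ y ∈ crownGround n ∧ crownCover n x y)

/-- The ground set `{0,…,2n+1}` of `Ĉ_{2n}`. -/
def hatCrownGround (n : ℕ) : Finset ℕ := Finset.Icc 0 (2 * n + 1)

/-- The set of CCPs of `Ĉ_{2n}` with exactly `k` blocks. -/
def hatCCPs (n k : ℕ) : Set (Finset (Finset ℕ)) :=
  {π | IsCCP (hatCrownGround n) (hatCrownLe n) π ∧ π.card = k}

/-- The set `A_k` of pairs `(P, S)` where `P` is a CCP of the crown poset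
`C_{2n}`, `S` is a set of odd-cardinality blocks of `P`, and `|P| − |S| = k − 2`. -/
def Ak (n k : ℕ) : Set (Finset (Finset ℕ) × Finset (Finset ℕ)) :=
  {PS | IsCCP (crownGround n) (crownLe n) PS.1 ∧ PS.2 ⊆ PS.1 ∧
    (∀ B ∈ PS.2, Odd B.card) ∧ PS.1.card = PS.2.card + (k - 2)}

open Classical in
theorem bc_iff (G : SimpleGraph ℕ) (B : Finset ℕ) : BlockConnected G B ↔
    B.Nonempty ∧ ∀ C : ℕ → Prop, (∃ x ∈ B, C x) →
      (∀ a ∈ B, C a → ∀ b ∈ B, G.Adj a b → C b) → ∀ b ∈ B, C b := by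
  unfold BlockConnected
  rw [SimpleGraph.connected_iff]
  constructor
  · rintro ⟨hp, ⟨x0⟩⟩
    refine ⟨⟨x0.1, by simpa using x0.2⟩, ?_⟩
    rintro C ⟨x, hx, hxC⟩ hcl b hb
    have hr := hp ⟨x, by simpa using hx⟩ ⟨b, by simpa using hb⟩
    obtain ⟨w⟩ := hr
    have key : ∀ (u v : (B : Set ℕ)), (G.induce (B : Set ℕ)).Walk u v → C u.1 → C v.1 := by
      intro u v w
      induction w with
      | nil => exact id
      | cons h p ih =>
        intro hu
        exact ih (hcl _ (by simp) hu _ (by simp) (by simpa using h))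
    exact key _ _ w hxC
  · rintro ⟨⟨x0, hx0⟩, h⟩
    refine ⟨?_, ⟨⟨x0, by simpa using hx0⟩⟩⟩
    intro u v
    have := h (fun y => ∃ hy : y ∈ (B : Set ℕ), (G.induce (B : Set ℕ)).Reachable u ⟨y, hy⟩)
      ⟨u.1, by simpa using u.2, u.2, SimpleGraph.Reachable.refl _⟩
      (by
        rintro a ha ⟨ha', hr⟩ b hb hab
        refine ⟨by simpa using hb, hr.trans (SimpleGraph.Adj.reachable ?_)⟩
        simpa using hab) v.1 (by simpa using v.2)
    obtain ⟨_, h⟩ := this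
    exact h

theorem compat_transfer {le le' : ℕ → ℕ → Prop} {π K : Finset (Finset ℕ)}
    (h : ∀ B ∈ π, B ∈ K ∨ (∀ C, blockRel le π C B → C = B) ∨ (∀ C, blockRel le π B C → C = B))
    (hle : ∀ B ∈ K, ∀ C ∈ K, ∀ x ∈ B, ∀ y ∈ C, le x y → le' x y)
    (hc : IsCompatible le' K) : IsCompatible le π := by
  have src : ∀ B, (∀ C, blockRel le π C B → C = B) →
      ∀ C, Relation.TransGen (blockRel le π) C B → C = B := by
    intro B hB C hC
    induction hC using Relation.TransGen.head_induction_on with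
    | single h => exact hB _ h
    | head h _ ih => subst ih; exact hB _ h
  have snk : ∀ B, (∀ C, blockRel le π B C → C = B) →
      ∀ C, Relation.TransGen (blockRel le π) B C → C = B := by
    intro B hB C hC
    induction hC with
    | single h => exact hB _ h
    | tail _ h ih => subst ih; exact hB _ h
  have key : ∀ B B', B ∈ K → B' ∈ K → Relation.TransGen (blockRel le π) B B' →
      Relation.TransGen (blockRel le' K) B B' := by
    intro B B' hB hB' hT
    induction hT using Relation.TransGen.head_induction_on with
    | single h =>
      obtain ⟨_, _, x, hx, y, hy, hxy⟩ := h
      exact .single ⟨hB, hB', x, hx, y, hy, hle _ hB _ hB' x hx y hy hxy⟩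
    | head h1 h2 ih =>
      rename_i A C
      have hC : C ∈ K := by
        rcases h C h1.2.1 with hC | hC | hC
        · exact hC
        · rw [← hC _ h1]; exact hB
        · rw [← snk _ hC _ h2]; exact hB'
      obtain ⟨_, _, x, hx, y, hy, hxy⟩ := h1
      exact .head ⟨hB, hC, x, hx, y, hy, hle _ hB _ hC x hx y hy hxy⟩ (ih hC)
  intro B hB B' hB' h1 h2
  rcases h B hB with hk | hs | hs
  · rcases h B' hB' with hk' | hs' | hs'
    · exact hc B hk B' hk' (key _ _ hk hk' h1) (key _ _ hk' hk h2)
    · exact src _ hs' _ h1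
    · exact snk _ hs' _ h2
  · exact (src _ hs _ h2).symm
  · exact (snk _ hs _ h1).symm

theorem compat_sub {le le' : ℕ → ℕ → Prop} {π K : Finset (Finset ℕ)} (hK : K ⊆ π)
    (hle : ∀ B ∈ K, ∀ C ∈ K, ∀ x ∈ B, ∀ y ∈ C, le' x y → le x y)
    (hc : IsCompatible le π) : IsCompatible le' K := by
  have mono : ∀ B B', Relation.TransGen (blockRel le' K) B B' →
      Relation.TransGen (blockRel le π) B B' := by
    intro B B' h
    have st : ∀ A C, blockRel le' K A C → blockRel le π A C := by
      rintro A C ⟨hA, hC, x, hx, y, hy, hxy⟩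
      exact ⟨hK hA, hK hC, x, hx, y, hy, hle _ hA _ hC x hx y hy hxy⟩
    induction h with
    | single h => exact .single (st _ _ h)
    | tail _ h ih => exact ih.tail (st _ _ h)
  intro B hB B' hB' h1 h2
  exact hc B (hK hB) B' (hK hB') (mono _ _ h1) (mono _ _ h2)

def DownC (n : ℕ) (B : Finset ℕ) : Prop :=
  ∀ y ∈ B, ∀ x ∈ crownGround n, crownCover n x y → x ∈ B

def UpC (n : ℕ) (B : Finset ℕ) : Prop :=
  ∀ x ∈ B, ∀ y ∈ crownGround n, crownCover n x y → y ∈ B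

theorem cadj (n x y : ℕ) : (compGraph (crownLe n)).Adj x y ↔
    crownCover n x y ∨ crownCover n y x := by
  unfold compGraph crownLe
  rw [SimpleGraph.fromRel_adj]
  constructor
  · rintro ⟨h, (h1 | h1) | (h1 | h1)⟩
    · exact absurd h1 h
    · exact .inl h1
    · exact absurd h1.symm h
    · exact .inr h1
  · intro h
    refine ⟨?_, by tauto⟩
    rintro rfl
    rcases h with h | h <;>
    · have := h.1; have h2 := h.2.1
      rw [Nat.odd_iff] at this; rw [Nat.even_iff] at h2; omega

theorem parity_key (n : ℕ) (hn : 2 ≤ n) (B : Finset ℕ) (hB : B ⊆ crownGround n)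
    (hne : B ≠ crownGround n) (hc : BlockConnected (compGraph (crownLe n)) B) :
    (Odd B.card ↔ DownC n B ∨ UpC n B) ∧ ¬ (DownC n B ∧ UpC n B) := by
  obtain ⟨⟨x0, hx0⟩, hcon⟩ := (bc_iff _ _).1 hc
  have hex : ∃ y ∈ crownGround n, y ∉ B := by
    by_contra hcon
    push Not at hcon
    exact hne (Finset.Subset.antisymm hB hcon)
  obtain ⟨c, hcg, hcB⟩ := hex
  have memg : ∀ z, z ∈ crownGround n ↔ 1 ≤ z ∧ z ≤ 2 * n := by
    intro z; simp [crownGround]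
  rw [memg] at hcg
  obtain ⟨q, hq⟩ : ∃ q : ℕ → ℕ, ∀ i, q i = (c - 1 + i) % (2 * n) + 1 := ⟨_, fun _ => rfl⟩
  have hlt : ∀ i, (c - 1 + i) % (2 * n) < 2 * n := fun i => Nat.mod_lt _ (by omega)
  have qg : ∀ i, 1 ≤ q i ∧ q i ≤ 2 * n := by
    intro i; have := hlt i; rw [hq]; omega
  have q0 : q 0 = c := by
    rw [hq, add_zero, Nat.mod_eq_of_lt (by omega)]; omega
  have qN : q (2 * n) = c := by
    rw [hq, Nat.add_mod_right, Nat.mod_eq_of_lt (by omega)]; omega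
  have qs : ∀ i, q (i + 1) = if q i = 2 * n then 1 else q i + 1 := by
    intro i
    have := hlt i
    have h1 : q (i + 1) = ((c - 1 + i) % (2 * n) + 1) % (2 * n) + 1 := by
      rw [hq, Nat.mod_add_mod, add_assoc]
    rw [h1, hq]
    split_ifs with h
    · rw [show (c - 1 + i) % (2 * n) + 1 = 2 * n by omega, Nat.mod_self]
    · rw [Nat.mod_eq_of_lt (by omega)]
  have qpar : ∀ i, q i % 2 = (c + i) % 2 := by
    intro i
    induction i with
    | zero => rw [q0]; rfl
    | succ i ih => rw [qs]; split_ifs <;> omega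
  have qinj : ∀ i j, i < 2 * n → j < 2 * n → q i = q j → i = j := by
    intro i j hi hj h
    rw [hq, hq] at h
    have h' : (c - 1 + i) ≡ (c - 1 + j) [MOD (2 * n)] := Nat.succ_injective h
    have := Nat.ModEq.add_left_cancel' _ h'
    rwa [Nat.ModEq, Nat.mod_eq_of_lt hi, Nat.mod_eq_of_lt hj] at this
  have qsurj : ∀ z, 1 ≤ z → z ≤ 2 * n → ∃ i, q i = z := by
    intro z h1 h2
    refine ⟨2 * n - (c - 1) + (z - 1), ?_⟩
    rw [hq, show c - 1 + (2 * n - (c - 1) + (z - 1)) = (z - 1) + 2 * n by omega,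
      Nat.add_mod_right, Nat.mod_eq_of_lt (by omega)]
    omega
  have covs : ∀ i, (q i % 2 = 1 → crownCover n (q i) (q (i + 1))) ∧
      (q i % 2 = 0 → crownCover n (q (i + 1)) (q i)) := by
    intro i
    have := qg i
    unfold crownCover
    rw [qs]
    simp only [Nat.odd_iff, Nat.even_iff]
    split_ifs <;> omega
  have nbr : ∀ i b, (1 ≤ b ∧ b ≤ 2 * n) →
      crownCover n (q (i + 1)) b ∨ crownCover n b (q (i + 1)) → b = q i ∨ b = q (i + 2) := by
    intro i b hb h
    have h0 := qg i
    have h1 := qs i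
    have h2 : q (i + 2) = _ := qs (i + 1)
    clear qN q0 covs
    generalize q (i + 2) = u at *
    generalize q (i + 1) = v at *
    generalize q i = w at *
    unfold crownCover at h
    simp only [Nat.odd_iff, Nat.even_iff] at h
    split_ifs at h1 <;> split_ifs at h2 <;> omega
  have hexa : ∃ i, q i ∈ B := by
    have := hB hx0
    rw [memg] at this
    obtain ⟨i, hi⟩ := qsurj x0 this.1 this.2
    exact ⟨i, hi ▸ hx0⟩
  classical
  obtain ⟨a, haB, hamin⟩ : ∃ a, q a ∈ B ∧ ∀ i < a, q i ∉ B :=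
    ⟨Nat.find hexa, Nat.find_spec hexa, fun i hi => Nat.find_min hexa hi⟩
  have ha0 : a ≠ 0 := by rintro rfl; rw [q0] at haB; exact hcB haB
  have haN : a < 2 * n := by
    by_contra hge
    have hper : q (a - 2 * n) = q a := by
      rw [hq, hq]
      have : c - 1 + a = c - 1 + (a - 2 * n) + 2 * n := by omega
      rw [this, Nat.add_mod_right]
    exact hamin (a - 2 * n) (by omega) (hper ▸ haB)
  have hexm : ∃ i, a < i ∧ q i ∉ B := ⟨2 * n, haN, by rw [qN]; exact hcB⟩
  obtain ⟨m, ham, hmB, hmmin, hmN⟩ :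
      ∃ m, a < m ∧ q m ∉ B ∧ (∀ i, a < i → i < m → q i ∈ B) ∧ m ≤ 2 * n := by
    refine ⟨Nat.find hexm, (Nat.find_spec hexm).1, (Nat.find_spec hexm).2, ?_, ?_⟩
    · intro i h1 h2
      by_contra h3
      exact Nat.find_min hexm h2 ⟨h1, h3⟩
    · exact Nat.find_min' hexm ⟨haN, by rw [qN]; exact hcB⟩
  have arcB : ∀ i, a ≤ i → i < m → q i ∈ B := by
    intro i h1 h2
    rcases h1.eq_or_lt with rfl | h1
    · exact haB
    · exact hmmin i h1 h2
  have Barc : ∀ b ∈ B, ∃ i, a ≤ i ∧ i < m ∧ q i = b := by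
    refine hcon (fun b => ∃ i, a ≤ i ∧ i < m ∧ q i = b) ⟨q a, haB, a, le_rfl, ham, rfl⟩ ?_
    rintro _ _ ⟨i, hai, him, rfl⟩ b hb hadj
    rw [cadj] at hadj
    obtain ⟨j, rfl⟩ : ∃ j, i = j + 1 := ⟨i - 1, by omega⟩
    rcases nbr j b ((memg b).1 (hB hb)) hadj with rfl | rfl
    · refine ⟨j, ?_, by omega, rfl⟩
      by_contra hlt
      exact hamin j (by omega) hb
    · refine ⟨j + 2, by omega, ?_, rfl⟩
      by_contra hge
      have : j + 2 = m := by omega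
      exact hmB (this ▸ hb)
  have hBimg : B = (Finset.Ico a m).image q := by
    ext b
    simp only [Finset.mem_image, Finset.mem_Ico]
    constructor
    · intro hb
      obtain ⟨i, h1, h2, h3⟩ := Barc b hb
      exact ⟨i, ⟨h1, h2⟩, h3⟩
    · rintro ⟨i, ⟨h1, h2⟩, rfl⟩
      exact arcB i h1 h2
  have hcard : B.card = m - a := by
    rw [hBimg, Finset.card_image_of_injOn, Nat.card_Ico]
    intro i hi j hj h
    simp only [Finset.coe_Ico, Set.mem_Ico] at hi hj
    exact qinj i j (by omega) (by omega) h
  obtain ⟨a', rfl⟩ : ∃ j, a = j + 1 := ⟨a - 1, by omega⟩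
  obtain ⟨m', rfl⟩ : ∃ j, m = j + 1 := ⟨m - 1, by omega⟩
  have hout : q a' ∉ B := hamin a' (by omega)
  have hlast : q m' ∈ B := arcB m' (by omega) (by omega)
  have p1 := qpar a'
  have p2 := qpar (a' + 1)
  have p3 := qpar m'
  have p4 := qpar (m' + 1)
  have dn : DownC n B ↔ q (a' + 1) % 2 = 1 ∧ q m' % 2 = 1 := by
    constructor
    · intro hd
      constructor
      · by_contra h
        exact hout (hd _ haB _ ((memg _).2 (qg _)) ((covs a').1 (by omega)))
      · by_contra h
        exact hmB (hd _ hlast _ ((memg _).2 (qg _)) ((covs m').2 (by omega)))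
    · rintro ⟨h1, h2⟩ y hy x hx hcov
      obtain ⟨i, hi1, hi2, rfl⟩ := Barc y hy
      obtain ⟨j, rfl⟩ : ∃ j, i = j + 1 := ⟨i - 1, by omega⟩
      have hev : q (j + 1) % 2 = 0 := Nat.even_iff.1 hcov.2.1
      have e1 : j ≠ a' := by rintro rfl; omega
      have e2 : j + 1 ≠ m' := by rintro rfl; omega
      rcases nbr j x ((memg x).1 hx) (.inr hcov) with rfl | rfl
      · exact arcB _ (by omega) (by omega)
      · exact arcB _ (by omega) (by omega)
  have up : UpC n B ↔ q (a' + 1) % 2 = 0 ∧ q m' % 2 = 0 := by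
    constructor
    · intro hd
      constructor
      · by_contra h
        exact hout (hd _ haB _ ((memg _).2 (qg _)) ((covs a').2 (by omega)))
      · by_contra h
        exact hmB (hd _ hlast _ ((memg _).2 (qg _)) ((covs m').1 (by omega)))
    · rintro ⟨h1, h2⟩ y hy x hx hcov
      obtain ⟨i, hi1, hi2, rfl⟩ := Barc y hy
      obtain ⟨j, rfl⟩ : ∃ j, i = j + 1 := ⟨i - 1, by omega⟩
      have hev : q (j + 1) % 2 = 1 := Nat.odd_iff.1 hcov.1
      have e1 : j ≠ a' := by rintro rfl; omega
      have e2 : j + 1 ≠ m' := by rintro rfl; omega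
      rcases nbr j x ((memg x).1 hx) (.inl hcov) with rfl | rfl
      · exact arcB _ (by omega) (by omega)
      · exact arcB _ (by omega) (by omega)
  rw [dn, up, hcard, Nat.odd_iff]
  omega

def stepIn (G : SimpleGraph ℕ) (D : Finset ℕ) (a b : ℕ) : Prop := a ∈ D ∧ b ∈ D ∧ G.Adj a b

open Classical in
noncomputable def gcomp (G : SimpleGraph ℕ) (D : Finset ℕ) (x : ℕ) : Finset ℕ :=
  D.filter (fun y => Relation.ReflTransGen (stepIn G D) x y)

open Classical in
noncomputable def cmps (G : SimpleGraph ℕ) (D : Finset ℕ) : Finset (Finset ℕ) :=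
  D.image (gcomp G D)

theorem mem_cmp {G : SimpleGraph ℕ} {D : Finset ℕ} {x y : ℕ} :
    y ∈ gcomp G D x ↔ y ∈ D ∧ Relation.ReflTransGen (stepIn G D) x y := by
  simp [gcomp]

theorem step_symm {G : SimpleGraph ℕ} {D : Finset ℕ} {x y : ℕ}
    (h : Relation.ReflTransGen (stepIn G D) x y) : Relation.ReflTransGen (stepIn G D) y x := by
  induction h with
  | refl => exact .refl
  | tail _ h ih => exact .head ⟨h.2.1, h.1, h.2.2.symm⟩ ih

theorem cmp_eq {G : SimpleGraph ℕ} {D : Finset ℕ} {x y : ℕ} (h : y ∈ gcomp G D x) :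
    gcomp G D y = gcomp G D x := by
  rw [mem_cmp] at h
  ext z
  rw [mem_cmp, mem_cmp]
  exact ⟨fun hz => ⟨hz.1, h.2.trans hz.2⟩, fun hz => ⟨hz.1, (step_symm h.2).trans hz.2⟩⟩

theorem mem_cmps {G : SimpleGraph ℕ} {D B : Finset ℕ} :
    B ∈ cmps G D ↔ ∃ x ∈ D, gcomp G D x = B := by simp [cmps]

theorem cmps_sub {G : SimpleGraph ℕ} {D B : Finset ℕ} (h : B ∈ cmps G D) : B ⊆ D := by
  obtain ⟨x, _, rfl⟩ := mem_cmps.1 h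
  intro y hy
  exact (mem_cmp.1 hy).1

theorem cmps_uniq {G : SimpleGraph ℕ} {D B C : Finset ℕ} (hB : B ∈ cmps G D) (hC : C ∈ cmps G D)
    {x : ℕ} (h1 : x ∈ B) (h2 : x ∈ C) : B = C := by
  obtain ⟨b, _, rfl⟩ := mem_cmps.1 hB
  obtain ⟨c, _, rfl⟩ := mem_cmps.1 hC
  rw [← cmp_eq h1, cmp_eq h2]

theorem cmps_cover {G : SimpleGraph ℕ} {D : Finset ℕ} {x : ℕ} (h : x ∈ D) :
    ∃ B ∈ cmps G D, x ∈ B := ⟨_, mem_cmps.2 ⟨x, h, rfl⟩, mem_cmp.2 ⟨h, .refl⟩⟩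

theorem cmps_conn {G : SimpleGraph ℕ} {D B : Finset ℕ} (h : B ∈ cmps G D) :
    BlockConnected G B := by
  obtain ⟨x, hx, rfl⟩ := mem_cmps.1 h
  have hxx : x ∈ gcomp G D x := mem_cmp.2 ⟨hx, .refl⟩
  rw [bc_iff]
  refine ⟨⟨x, hxx⟩, ?_⟩
  rintro C ⟨z, hz, hzC⟩ hcl b hb
  rw [← cmp_eq hz] at hb hcl
  have hr := (mem_cmp.1 hb).2
  have hzD := (mem_cmp.1 hz).1
  clear hb
  have : b ∈ gcomp G D z ∧ C b := by
    induction hr with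
    | refl => exact ⟨mem_cmp.2 ⟨hzD, .refl⟩, hzC⟩
    | tail h1 h2 ih =>
      have : _ ∈ gcomp G D z := mem_cmp.2 ⟨h2.2.1, h1.tail h2⟩
      exact ⟨this, hcl _ ih.1 ih.2 _ this h2.2.2⟩
  exact this.2

theorem cmps_closed {G : SimpleGraph ℕ} {D B : Finset ℕ} (h : B ∈ cmps G D) {y z : ℕ}
    (hy : y ∈ B) (hz : z ∈ D) (ha : G.Adj y z) : z ∈ B := by
  obtain ⟨x, hx, rfl⟩ := mem_cmps.1 h
  rw [mem_cmp] at hy ⊢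
  exact ⟨hz, hy.2.tail ⟨hy.1, hz, ha⟩⟩

theorem sup_cmps (G : SimpleGraph ℕ) (D : Finset ℕ) : (cmps G D).sup id = D := by
  ext x
  rw [Finset.mem_sup]
  constructor
  · rintro ⟨B, hB, hx⟩; exact cmps_sub hB hx
  · intro hx; exact cmps_cover hx

theorem cmps_down {n : ℕ} {D B : Finset ℕ} (hD : DownC n D)
    (h : B ∈ cmps (compGraph (crownLe n)) D) : DownC n B := by
  intro y hy x hx hc
  exact cmps_closed h hy (hD y (cmps_sub h hy) x hx hc) ((cadj _ _ _).2 (.inr hc))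

theorem cmps_up {n : ℕ} {D B : Finset ℕ} (hD : UpC n D)
    (h : B ∈ cmps (compGraph (crownLe n)) D) : UpC n B := by
  intro y hy x hx hc
  exact cmps_closed h hy (hD y (cmps_sub h hy) x hx hc) ((cadj _ _ _).2 (.inl hc))

theorem fam_sub {G : SimpleGraph ℕ} {S T : Finset (Finset ℕ)}
    (cS : ∀ B ∈ S, BlockConnected G B) (cT : ∀ B ∈ T, BlockConnected G B)
    (sS : ∀ B ∈ S, ∀ C ∈ S, ∀ x ∈ B, ∀ y ∈ C, G.Adj x y ∨ x = y → B = C)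
    (sT : ∀ B ∈ T, ∀ C ∈ T, ∀ x ∈ B, ∀ y ∈ C, G.Adj x y ∨ x = y → B = C)
    (h : S.sup id = T.sup id) : S ⊆ T := by
  have aux : ∀ S T : Finset (Finset ℕ), (∀ B ∈ S, BlockConnected G B) →
      (∀ B ∈ T, ∀ C ∈ T, ∀ x ∈ B, ∀ y ∈ C, G.Adj x y ∨ x = y → B = C) →
      S.sup id = T.sup id → ∀ B ∈ S, ∀ C ∈ T, ∀ x ∈ B, x ∈ C → B ⊆ C := by
    intro S T cS sT h B hB C hC x hx hxC
    refine ((bc_iff _ _).1 (cS B hB)).2 (fun z => z ∈ C) ⟨x, hx, hxC⟩ ?_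
    intro a ha haC b hb hab
    have : b ∈ T.sup id := h ▸ Finset.mem_sup.2 ⟨B, hB, hb⟩
    obtain ⟨C', hC', hb'⟩ := Finset.mem_sup.1 this
    rw [sT C hC C' hC' a haC b hb' (.inl hab)]
    exact hb'
  intro B hB
  obtain ⟨x, hx⟩ := ((bc_iff _ _).1 (cS B hB)).1
  have : x ∈ T.sup id := h ▸ Finset.mem_sup.2 ⟨B, hB, hx⟩
  obtain ⟨C, hC, hxC⟩ := Finset.mem_sup.1 this
  have hxC : x ∈ C := hxC
  have : B = C := Finset.Subset.antisymm (aux S T cS sT h B hB C hC x hx hxC)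
    (aux T S cT sS h.symm C hC B hB x hxC hx)
  rwa [this]

/-- Core data. -/
structure Core (n : ℕ) (R : Finset (Finset ℕ)) (D U : Finset ℕ) : Prop where
  ne : ∀ B ∈ R, B.Nonempty
  Rg : ∀ B ∈ R, B ⊆ crownGround n
  Dg : D ⊆ crownGround n
  Ug : U ⊆ crownGround n
  cov : ∀ x ∈ crownGround n, x ∈ D ∨ x ∈ U ∨ ∃ B ∈ R, x ∈ B
  DU : ∀ x ∈ D, x ∉ U
  RD : ∀ B ∈ R, ∀ x ∈ B, x ∉ D
  RU : ∀ B ∈ R, ∀ x ∈ B, x ∉ U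
  RR : ∀ B ∈ R, ∀ C ∈ R, ∀ x ∈ B, x ∈ C → B = C
  dn : DownC n D
  up : UpC n U
  conn : ∀ B ∈ R, BlockConnected (compGraph (crownLe n)) B
  compat : IsCompatible (crownLe n) R

def TT (n k : ℕ) : Set (Finset (Finset ℕ) × Finset ℕ × Finset ℕ) :=
  {t | Core n t.1 t.2.1 t.2.2 ∧ t.1.card + 2 = k}

def mk (n : ℕ) (t : Finset (Finset ℕ) × Finset ℕ × Finset ℕ) : Finset (Finset ℕ) :=
  insert (insert 0 t.2.1) (insert (insert (2 * n + 1) t.2.2) t.1)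

theorem mg {n z : ℕ} : z ∈ crownGround n ↔ 1 ≤ z ∧ z ≤ 2 * n := by simp [crownGround]

theorem mhg {n z : ℕ} : z ∈ hatCrownGround n ↔ z ≤ 2 * n + 1 := by simp [hatCrownGround]

theorem le_iff {n x y : ℕ} (hx : x ∈ crownGround n) (hy : y ∈ crownGround n) :
    hatCrownLe n x y ↔ crownLe n x y := by
  have h1 := mg.1 hx
  have h2 := mg.1 hy
  unfold hatCrownLe crownLe
  constructor
  · rintro (h | h | h | h)
    · exact .inl h
    · omega
    · omega
    · exact .inr h.2.2
  · rintro (h | h)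
    · exact .inl h
    · exact .inr (.inr (.inr ⟨hx, hy, h⟩))

theorem conn_iff {n : ℕ} {B : Finset ℕ} (hB : B ⊆ crownGround n) :
    BlockConnected (compGraph (hatCrownLe n)) B ↔ BlockConnected (compGraph (crownLe n)) B := by
  have key : ∀ a ∈ B, ∀ b ∈ B, (compGraph (hatCrownLe n)).Adj a b ↔
      (compGraph (crownLe n)).Adj a b := by
    intro a ha b hb
    unfold compGraph
    rw [SimpleGraph.fromRel_adj, SimpleGraph.fromRel_adj, le_iff (hB ha) (hB hb),
      le_iff (hB hb) (hB ha)]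
  rw [bc_iff, bc_iff]
  constructor
  · rintro ⟨h1, h2⟩
    exact ⟨h1, fun C h3 h4 => h2 C h3 fun a ha hC b hb hab => h4 a ha hC b hb ((key a ha b hb).1 hab)⟩
  · rintro ⟨h1, h2⟩
    exact ⟨h1, fun C h3 h4 => h2 C h3 fun a ha hC b hb hab => h4 a ha hC b hb ((key a ha b hb).2 hab)⟩

theorem mk_injOn (n k : ℕ) : Set.InjOn (mk n) (TT n k) := by
  have aux : ∀ R D U R' D' U', Core n R D U → Core n R' D' U' →
      mk n (R, D, U) = mk n (R', D', U') → D ⊆ D' ∧ U ⊆ U' ∧ R ⊆ R' := by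
    intro R D U R' D' U' h h' he
    have z0 : ∀ {B : Finset ℕ}, B ⊆ crownGround n → 0 ∉ B := fun hB h0 => by
      have := mg.1 (hB h0); omega
    have z1 : ∀ {B : Finset ℕ}, B ⊆ crownGround n → 2 * n + 1 ∉ B := fun hB h0 => by
      have := mg.1 (hB h0); omega
    refine ⟨?_, ?_, ?_⟩
    · have : insert 0 D ∈ mk n (R', D', U') := he ▸ by simp [mk]
      simp only [mk, Finset.mem_insert] at this
      rcases this with this | this | this
      · intro x hx
        have : x ∈ insert 0 D' := this ▸ Finset.mem_insert_of_mem hx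
        rcases Finset.mem_insert.1 this with rfl | h3
        · exact absurd hx (z0 h.Dg)
        · exact h3
      · have : 0 ∈ insert (2 * n + 1) U' := this ▸ Finset.mem_insert_self _ _
        rcases Finset.mem_insert.1 this with h3 | h3
        · omega
        · exact absurd h3 (z0 h'.Ug)
      · exact absurd (Finset.mem_insert_self 0 D) (z0 (h'.Rg _ this))
    · have : insert (2 * n + 1) U ∈ mk n (R', D', U') := he ▸ by simp [mk]
      simp only [mk, Finset.mem_insert] at this
      rcases this with this | this | this
      · have : 2 * n + 1 ∈ insert 0 D' := this ▸ Finset.mem_insert_self _ _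
        rcases Finset.mem_insert.1 this with h3 | h3
        · omega
        · exact absurd h3 (z1 h'.Dg)
      · intro x hx
        have : x ∈ insert (2 * n + 1) U' := this ▸ Finset.mem_insert_of_mem hx
        rcases Finset.mem_insert.1 this with rfl | h3
        · exact absurd hx (z1 h.Ug)
        · exact h3
      · exact absurd (Finset.mem_insert_self (2 * n + 1) U) (z1 (h'.Rg _ this))
    · intro B hB
      have : B ∈ mk n (R', D', U') := he ▸ by simp [mk, hB]
      simp only [mk, Finset.mem_insert] at this
      rcases this with rfl | rfl | this
      · exact absurd (Finset.mem_insert_self _ _) (z0 (h.Rg _ hB))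
      · exact absurd (Finset.mem_insert_self _ _) (z1 (h.Rg _ hB))
      · exact this
  rintro ⟨R, D, U⟩ ⟨h, _⟩ ⟨R', D', U'⟩ ⟨h', _⟩ he
  dsimp only at h h'
  obtain ⟨a, b, c⟩ := aux _ _ _ _ _ _ h h' he
  obtain ⟨a', b', c'⟩ := aux _ _ _ _ _ _ h' h he.symm
  rw [a.antisymm a', b.antisymm b', c.antisymm c']

theorem hat_sub (n k : ℕ) : mk n '' TT n k ⊆ hatCCPs n k := by
  rintro _ ⟨⟨R, D, U⟩, ⟨h, hk⟩, rfl⟩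
  dsimp only at h hk
  have z0 : ∀ {B : Finset ℕ}, B ⊆ crownGround n → 0 ∉ B := fun hB h0 => by
    have := mg.1 (hB h0); omega
  have z1 : ∀ {B : Finset ℕ}, B ⊆ crownGround n → 2 * n + 1 ∉ B := fun hB h0 => by
    have := mg.1 (hB h0); omega
  have n1 : insert (2 * n + 1) U ∉ R := fun hm => z1 (h.Rg _ hm) (Finset.mem_insert_self _ _)
  have n0 : insert 0 D ∉ R := fun hm => z0 (h.Rg _ hm) (Finset.mem_insert_self _ _)
  have n01 : insert 0 D ≠ insert (2 * n + 1) U := by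
    intro he
    have : 0 ∈ insert (2 * n + 1) U := he ▸ Finset.mem_insert_self _ _
    rcases Finset.mem_insert.1 this with h3 | h3
    · omega
    · exact z0 h.Ug h3
  have memk : ∀ B, B ∈ mk n (R, D, U) ↔ B = insert 0 D ∨ B = insert (2 * n + 1) U ∨ B ∈ R := by
    intro B; simp [mk]
  have uniq : ∀ B ∈ mk n (R, D, U), ∀ C ∈ mk n (R, D, U), ∀ x ∈ B, x ∈ C → B = C := by
    have d01 : ∀ x, x ∈ insert 0 D → x ∈ insert (2 * n + 1) U → False := by
      intro x h1 h2
      rcases Finset.mem_insert.1 h1 with rfl | h1 <;> rcases Finset.mem_insert.1 h2 with h2 | h2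
      · omega
      · exact z0 h.Ug h2
      · subst h2; exact z1 h.Dg h1
      · exact h.DU x h1 h2
    have d0 : ∀ B ∈ R, ∀ x ∈ B, x ∈ insert 0 D → False := by
      intro B hB x hx h1
      rcases Finset.mem_insert.1 h1 with rfl | h1
      · exact z0 (h.Rg B hB) hx
      · exact h.RD B hB x hx h1
    have d1 : ∀ B ∈ R, ∀ x ∈ B, x ∈ insert (2 * n + 1) U → False := by
      intro B hB x hx h1
      rcases Finset.mem_insert.1 h1 with rfl | h1
      · exact z1 (h.Rg B hB) hx
      · exact h.RU B hB x hx h1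
    intro B hB C hC x hx hx'
    rw [memk] at hB hC
    rcases hB with rfl | rfl | hB <;> rcases hC with rfl | rfl | hC
    · rfl
    · exact (d01 x hx hx').elim
    · exact (d0 C hC x hx' hx).elim
    · exact (d01 x hx' hx).elim
    · rfl
    · exact (d1 C hC x hx' hx).elim
    · exact (d0 B hB x hx hx').elim
    · exact (d1 B hB x hx hx').elim
    · exact h.RR B hB C hC x hx hx'
  have sub : ∀ B ∈ mk n (R, D, U), B ⊆ hatCrownGround n := by
    have gg : ∀ {x}, x ∈ crownGround n → x ∈ hatCrownGround n := fun hx => by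
      rw [mhg]; have := mg.1 hx; omega
    intro B hB x hx
    rw [memk] at hB
    rcases hB with rfl | rfl | hB
    · rcases Finset.mem_insert.1 hx with rfl | hx
      · rw [mhg]; omega
      · exact gg (h.Dg hx)
    · rcases Finset.mem_insert.1 hx with rfl | hx
      · rw [mhg]
      · exact gg (h.Ug hx)
    · exact gg (h.Rg B hB hx)
  have nem : ∀ B ∈ mk n (R, D, U), B.Nonempty := by
    intro B hB
    rw [memk] at hB
    rcases hB with rfl | rfl | hB
    · exact Finset.insert_nonempty _ _
    · exact Finset.insert_nonempty _ _
    · exact h.ne B hB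
  refine ⟨⟨⟨⟨nem, sub, ?_⟩, ?_⟩, ?_⟩, ?_⟩
  · intro x hx
    have : ∃ B ∈ mk n (R, D, U), x ∈ B := by
      rw [mhg] at hx
      by_cases hx0 : x = 0
      · exact ⟨_, (memk _).2 (.inl rfl), by simp [hx0]⟩
      by_cases hx1 : x = 2 * n + 1
      · exact ⟨_, (memk _).2 (.inr (.inl rfl)), by simp [hx1]⟩
      rcases h.cov x (mg.2 (by omega)) with hh | hh | ⟨B, hB, hh⟩
      · exact ⟨_, (memk _).2 (.inl rfl), by simp [hh]⟩
      · exact ⟨_, (memk _).2 (.inr (.inl rfl)), by simp [hh]⟩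
      · exact ⟨B, (memk _).2 (.inr (.inr hB)), hh⟩
    obtain ⟨B, hB, hxB⟩ := this
    exact ⟨B, ⟨hB, hxB⟩, fun C hC => uniq C hC.1 B hB x hC.2 hxB⟩
  · intro B hB
    have hB' := hB
    rw [memk] at hB
    rcases hB with rfl | rfl | hB
    · rw [bc_iff]
      refine ⟨nem _ hB', ?_⟩
      have adj : ∀ y, y ≠ 0 → (compGraph (hatCrownLe n)).Adj 0 y := by
        intro y hy
        unfold compGraph
        rw [SimpleGraph.fromRel_adj]
        exact ⟨hy.symm, .inl (.inr (.inl rfl))⟩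
      rintro C ⟨x, hx, hxC⟩ hcl b hb
      have h0 : C 0 := by
        by_cases hx0 : x = 0
        · exact hx0 ▸ hxC
        · exact hcl x hx hxC 0 (by simp) (adj x hx0).symm
      by_cases hb0 : b = 0
      · exact hb0 ▸ h0
      · exact hcl 0 (by simp) h0 b hb (adj b hb0)
    · rw [bc_iff]
      refine ⟨nem _ hB', ?_⟩
      have adj : ∀ y, y ≠ 2 * n + 1 → (compGraph (hatCrownLe n)).Adj (2 * n + 1) y := by
        intro y hy
        unfold compGraph
        rw [SimpleGraph.fromRel_adj]
        exact ⟨hy.symm, .inr (.inr (.inr (.inl rfl)))⟩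
      rintro C ⟨x, hx, hxC⟩ hcl b hb
      have h0 : C (2 * n + 1) := by
        by_cases hx0 : x = 2 * n + 1
        · exact hx0 ▸ hxC
        · exact hcl x hx hxC _ (by simp) (adj x hx0).symm
      by_cases hb0 : b = 2 * n + 1
      · exact hb0 ▸ h0
      · exact hcl _ (by simp) h0 b hb (adj b hb0)
    · exact (conn_iff (h.Rg B hB)).2 (h.conn B hB)
  · refine compat_transfer (K := R) (le' := crownLe n) ?_ ?_ h.compat
    · intro B hB
      rcases (memk B).1 hB with rfl | rfl | hB'
      · right; left
        rintro C ⟨hC, _, x, hx, y, hy, hxy⟩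
        refine uniq C hC _ hB x hx ?_
        rcases hxy with rfl | rfl | rfl | hxy
        · exact hy
        · simp
        · exfalso
          rcases Finset.mem_insert.1 hy with h3 | h3
          · omega
          · exact z1 h.Dg h3
        · rcases Finset.mem_insert.1 hy with rfl | h3
          · have := mg.1 hxy.2.1; omega
          · exact Finset.mem_insert_of_mem (h.dn y h3 x hxy.1 hxy.2.2)
      · right; right
        rintro C ⟨_, hC, x, hx, y, hy, hxy⟩
        refine uniq C hC _ hB y hy ?_
        rcases hxy with rfl | rfl | rfl | hxy
        · exact hx
        · exfalso
          rcases Finset.mem_insert.1 hx with h3 | h3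
          · omega
          · exact z0 h.Ug h3
        · simp
        · rcases Finset.mem_insert.1 hx with rfl | h3
          · have := mg.1 hxy.1; omega
          · exact Finset.mem_insert_of_mem (h.up x h3 y hxy.2.1 hxy.2.2)
      · exact .inl hB'
    · intro B hB C hC x hx y hy hxy
      exact (le_iff (h.Rg B hB hx) (h.Rg C hC hy)).1 hxy
  · unfold mk
    rw [Finset.card_insert_of_notMem, Finset.card_insert_of_notMem n1]
    · exact hk
    · rw [Finset.mem_insert]; push Not; exact ⟨n01, n0⟩

theorem hat_sup (n k : ℕ) (hk : 2 ≤ k) : hatCCPs n k ⊆ mk n '' TT n k := by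
  rintro π ⟨⟨⟨⟨nem, sub, ex⟩, conn⟩, comp⟩, card⟩
  have uniq : ∀ B ∈ π, ∀ C ∈ π, ∀ x ∈ B, x ∈ C → B = C := by
    intro B hB C hC x h1 h2
    exact (ex x (sub B hB h1)).unique ⟨hB, h1⟩ ⟨hC, h2⟩
  obtain ⟨B0, ⟨hB0, h0⟩, _⟩ := ex 0 (mhg.2 (by omega))
  obtain ⟨B1, ⟨hB1, h1⟩, _⟩ := ex (2 * n + 1) (mhg.2 (by omega))
  have le0 : ∀ B ∈ π, blockRel (hatCrownLe n) π B0 B := by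
    intro B hB
    obtain ⟨y, hy⟩ := nem B hB
    exact ⟨hB0, hB, 0, h0, y, hy, .inr (.inl rfl)⟩
  have le1 : ∀ B ∈ π, blockRel (hatCrownLe n) π B B1 := by
    intro B hB
    obtain ⟨y, hy⟩ := nem B hB
    exact ⟨hB, hB1, y, hy, _, h1, .inr (.inr (.inl rfl))⟩
  have hne : B0 ≠ B1 := by
    rintro rfl
    have : π ⊆ {B0} := by
      intro B hB
      rw [Finset.mem_singleton]
      exact comp B hB B0 hB0 (.single (le1 B hB)) (.single (le0 B hB))
    have := Finset.card_le_card this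
    simp at this
    omega
  have src : ∀ C ∈ π, blockRel (hatCrownLe n) π C B0 → C = B0 := fun C hC h =>
    comp C hC B0 hB0 (.single h) (.single (le0 C hC))
  have snk : ∀ C ∈ π, blockRel (hatCrownLe n) π B1 C → C = B1 := fun C hC h =>
    comp C hC B1 hB1 (.single (le1 C hC)) (.single h)
  have h01 : 0 ∉ B1 := fun h => hne (uniq _ hB0 _ hB1 0 h0 h)
  have h10 : 2 * n + 1 ∉ B0 := fun h => hne (uniq _ hB0 _ hB1 _ h h1)
  have memR : ∀ B, B ∈ (π.erase B0).erase B1 ↔ B ≠ B1 ∧ B ≠ B0 ∧ B ∈ π := by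
    intro B; simp
  have g2 : ∀ x, x ∈ hatCrownGround n → x ≠ 0 → x ≠ 2 * n + 1 → x ∈ crownGround n := by
    intro x hx h h'
    rw [mhg] at hx; rw [mg]; omega
  have g1 : ∀ x, x ∈ crownGround n → x ∈ hatCrownGround n ∧ x ≠ 0 ∧ x ≠ 2 * n + 1 := by
    intro x hx
    rw [mg] at hx; rw [mhg]; omega
  have Rg : ∀ B ∈ (π.erase B0).erase B1, B ⊆ crownGround n := by
    intro B hB x hx
    rw [memR] at hB
    refine g2 x (sub B hB.2.2 hx) ?_ ?_
    · rintro rfl; exact hB.2.1 (uniq _ hB.2.2 _ hB0 _ hx h0)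
    · rintro rfl; exact hB.1 (uniq _ hB.2.2 _ hB1 _ hx h1)
  refine ⟨((π.erase B0).erase B1, B0.erase 0, B1.erase (2 * n + 1)), ⟨?_, ?_⟩, ?_⟩
  · constructor
    · intro B hB; exact nem B ((memR B).1 hB).2.2
    · exact Rg
    · intro x hx
      rw [Finset.mem_erase] at hx
      refine g2 x (sub B0 hB0 hx.2) hx.1 ?_
      rintro rfl; exact h10 hx.2
    · intro x hx
      rw [Finset.mem_erase] at hx
      refine g2 x (sub B1 hB1 hx.2) ?_ hx.1
      rintro rfl; exact h01 hx.2
    · intro x hx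
      obtain ⟨hg, hx0, hx1⟩ := g1 x hx
      obtain ⟨B, ⟨hB, hxB⟩, _⟩ := ex x hg
      by_cases e0 : B = B0
      · subst e0; exact .inl (Finset.mem_erase.2 ⟨hx0, hxB⟩)
      by_cases e1 : B = B1
      · subst e1; exact .inr (.inl (Finset.mem_erase.2 ⟨hx1, hxB⟩))
      exact .inr (.inr ⟨B, (memR B).2 ⟨e1, e0, hB⟩, hxB⟩)
    · intro x hx hx'
      exact hne (uniq _ hB0 _ hB1 x (Finset.mem_of_mem_erase hx) (Finset.mem_of_mem_erase hx'))
    · intro B hB x hx hx'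
      rw [memR] at hB
      exact hB.2.1 (uniq _ hB.2.2 _ hB0 x hx (Finset.mem_of_mem_erase hx'))
    · intro B hB x hx hx'
      rw [memR] at hB
      exact hB.1 (uniq _ hB.2.2 _ hB1 x hx (Finset.mem_of_mem_erase hx'))
    · intro B hB C hC
      exact uniq _ ((memR B).1 hB).2.2 _ ((memR C).1 hC).2.2
    · intro y hy x hx hc
      have hyB := Finset.mem_of_mem_erase hy
      by_cases hyg : y ∈ crownGround n
      · obtain ⟨hg, hx0, hx1⟩ := g1 x hx
        obtain ⟨B, ⟨hB, hxB⟩, _⟩ := ex x hg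
        have := src B hB ⟨hB, hB0, x, hxB, y, hyB, .inr (.inr (.inr ⟨hx, hyg, hc⟩))⟩
        subst this
        exact Finset.mem_erase.2 ⟨hx0, hxB⟩
      · exfalso
        refine hyg (g2 y (sub B0 hB0 hyB) (Finset.ne_of_mem_erase hy) ?_)
        rintro rfl; exact h10 hyB
    · intro y hy x hx hc
      have hyB := Finset.mem_of_mem_erase hy
      by_cases hyg : y ∈ crownGround n
      · obtain ⟨hg, hx0, hx1⟩ := g1 x hx
        obtain ⟨B, ⟨hB, hxB⟩, _⟩ := ex x hg
        have := snk B hB ⟨hB1, hB, y, hyB, x, hxB, .inr (.inr (.inr ⟨hyg, hx, hc⟩))⟩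
        subst this
        exact Finset.mem_erase.2 ⟨hx1, hxB⟩
      · exfalso
        refine hyg (g2 y (sub B1 hB1 hyB) ?_ (Finset.ne_of_mem_erase hy))
        rintro rfl; exact h01 hyB
    · intro B hB
      exact (conn_iff (Rg B hB)).1 (conn B ((memR B).1 hB).2.2)
    · refine compat_sub (fun B hB => ((memR B).1 hB).2.2) ?_ comp
      intro B hB C hC x hx y hy hxy
      exact (le_iff (Rg B hB hx) (Rg C hC hy)).2 hxy
  · show ((π.erase B0).erase B1).card + 2 = k
    rw [Finset.card_erase_of_mem (Finset.mem_erase.2 ⟨hne.symm, hB1⟩),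
      Finset.card_erase_of_mem hB0]
    omega
  · unfold mk
    dsimp only
    rw [Finset.insert_erase h0, Finset.insert_erase h1,
      Finset.insert_erase (Finset.mem_erase.2 ⟨hne.symm, hB1⟩), Finset.insert_erase hB0]

open Classical in
noncomputable def toT (n : ℕ) (t : Finset (Finset ℕ) × Finset (Finset ℕ)) :
    Finset (Finset ℕ) × Finset ℕ × Finset ℕ :=
  (t.1 \ t.2, (t.2.filter (DownC n)).sup id, (t.2.filter (UpC n)).sup id)

theorem mem_sup_filter {S : Finset (Finset ℕ)} {p : Finset ℕ → Prop} [DecidablePred p] {x : ℕ} :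
    x ∈ (S.filter p).sup id ↔ ∃ B ∈ S, p B ∧ x ∈ B := by
  rw [Finset.mem_sup]
  simp only [Finset.mem_filter, id, and_assoc]

theorem ground_card (n : ℕ) : (crownGround n).card = 2 * n := by simp [crownGround]

theorem ak_S {n k : ℕ} (hn : 2 ≤ n) {P S : Finset (Finset ℕ)} (h : (P, S) ∈ Ak n k) :
    ∀ B ∈ S, (DownC n B ∨ UpC n B) ∧ ¬ (DownC n B ∧ UpC n B) := by
  obtain ⟨⟨⟨⟨nem, sub, ex⟩, conn⟩, comp⟩, hS, hodd, card⟩ := h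
  intro B hB
  have := parity_key n hn B (sub B (hS hB)) (by
    rintro rfl
    have := hodd _ hB
    rw [ground_card, Nat.odd_iff] at this
    omega) (conn B (hS hB))
  exact ⟨this.1.1 (hodd B hB), this.2⟩

theorem ak_sep {n k : ℕ} {P S : Finset (Finset ℕ)} (h : (P, S) ∈ Ak n k) :
    (∀ B ∈ S, DownC n B → ∀ C ∈ S, DownC n C → ∀ x ∈ B, ∀ y ∈ C,
      (compGraph (crownLe n)).Adj x y ∨ x = y → B = C) ∧
    (∀ B ∈ S, UpC n B → ∀ C ∈ S, UpC n C → ∀ x ∈ B, ∀ y ∈ C,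
      (compGraph (crownLe n)).Adj x y ∨ x = y → B = C) := by
  obtain ⟨⟨⟨⟨nem, sub, ex⟩, conn⟩, comp⟩, hS, hodd, card⟩ := h
  have uniq : ∀ B ∈ S, ∀ C ∈ S, ∀ x ∈ B, x ∈ C → B = C := by
    intro B hB C hC x h1 h2
    exact (ex x (sub B (hS hB) h1)).unique ⟨hS hB, h1⟩ ⟨hS hC, h2⟩
  constructor
  · intro B hB dB C hC dC x hx y hy hxy
    rw [cadj] at hxy
    rcases hxy with (hc | hc) | rfl
    · exact uniq B hB C hC x hx (dC y hy x (sub B (hS hB) hx) hc)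
    · exact uniq B hB C hC y (dB x hx y (sub C (hS hC) hy) hc) hy
    · exact uniq B hB C hC x hx hy
  · intro B hB dB C hC dC x hx y hy hxy
    rw [cadj] at hxy
    rcases hxy with (hc | hc) | rfl
    · exact uniq B hB C hC y (dB x hx y (sub C (hS hC) hy) hc) hy
    · exact uniq B hB C hC x hx (dC y hy x (sub B (hS hB) hx) hc)
    · exact uniq B hB C hC x hx hy

theorem toT_injOn (n k : ℕ) (hn : 2 ≤ n) : Set.InjOn (toT n) (Ak n k) := by
  classical
  have aux : ∀ P S P' S', (P, S) ∈ Ak n k → (P', S') ∈ Ak n k →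
      toT n (P, S) = toT n (P', S') → S ⊆ S' := by
    intro P S P' S' h h' he
    simp only [toT, Prod.mk.injEq] at he
    obtain ⟨_, hd, hu⟩ := he
    have c : ∀ B ∈ S, BlockConnected (compGraph (crownLe n)) B :=
      fun B hB => h.1.1.2 B (h.2.1 hB)
    have c' : ∀ B ∈ S', BlockConnected (compGraph (crownLe n)) B :=
      fun B hB => h'.1.1.2 B (h'.2.1 hB)
    have s := ak_sep h
    have s' := ak_sep h'
    have f1 := fam_sub (G := compGraph (crownLe n))
      (fun B hB => c B (Finset.mem_filter.1 hB).1) (fun B hB => c' B (Finset.mem_filter.1 hB).1)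
      (fun B hB C hC => s.1 B (Finset.mem_filter.1 hB).1 (Finset.mem_filter.1 hB).2
        C (Finset.mem_filter.1 hC).1 (Finset.mem_filter.1 hC).2)
      (fun B hB C hC => s'.1 B (Finset.mem_filter.1 hB).1 (Finset.mem_filter.1 hB).2
        C (Finset.mem_filter.1 hC).1 (Finset.mem_filter.1 hC).2) hd
    have f2 := fam_sub (G := compGraph (crownLe n))
      (fun B hB => c B (Finset.mem_filter.1 hB).1) (fun B hB => c' B (Finset.mem_filter.1 hB).1)
      (fun B hB C hC => s.2 B (Finset.mem_filter.1 hB).1 (Finset.mem_filter.1 hB).2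
        C (Finset.mem_filter.1 hC).1 (Finset.mem_filter.1 hC).2)
      (fun B hB C hC => s'.2 B (Finset.mem_filter.1 hB).1 (Finset.mem_filter.1 hB).2
        C (Finset.mem_filter.1 hC).1 (Finset.mem_filter.1 hC).2) hu
    intro B hB
    rcases (ak_S hn h B hB).1 with hb | hb
    · exact (Finset.mem_filter.1 (f1 (Finset.mem_filter.2 ⟨hB, hb⟩))).1
    · exact (Finset.mem_filter.1 (f2 (Finset.mem_filter.2 ⟨hB, hb⟩))).1
  rintro ⟨P, S⟩ h ⟨P', S'⟩ h' he
  have e : S = S' := (aux _ _ _ _ h h' he).antisymm (aux _ _ _ _ h' h he.symm)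
  subst e
  simp only [toT, Prod.mk.injEq] at he
  have hP : P \ S ∪ S = P := Finset.sdiff_union_of_subset h.2.1
  have hP' : P' \ S ∪ S = P' := Finset.sdiff_union_of_subset h'.2.1
  rw [← hP, ← hP', he.1]

def exc (n : ℕ) : Set (Finset (Finset ℕ) × Finset ℕ × Finset ℕ) :=
  {(∅, crownGround n, ∅), (∅, ∅, crownGround n)}

theorem img_sub (n k : ℕ) (hn : 2 ≤ n) (hk : 2 ≤ k) : toT n '' Ak n k ⊆ TT n k \ exc n := by
  classical
  rintro _ ⟨⟨P, S⟩, h, rfl⟩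
  have hS1 := ak_S hn h
  have hsep := ak_sep h
  obtain ⟨⟨⟨⟨nem, sub, ex⟩, conn⟩, comp⟩, hS, hodd, card⟩ := h
  dsimp only at nem sub ex conn comp hS hodd card
  have uniq : ∀ B ∈ P, ∀ C ∈ P, ∀ x ∈ B, x ∈ C → B = C := by
    intro B hB C hC x h1 h2
    exact (ex x (sub B hB h1)).unique ⟨hB, h1⟩ ⟨hC, h2⟩
  have memR : ∀ {B}, B ∈ P \ S ↔ B ∈ P ∧ B ∉ S := Finset.mem_sdiff
  refine ⟨⟨?_, ?_⟩, ?_⟩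
  · constructor
    · intro B hB; exact nem B (memR.1 hB).1
    · intro B hB; exact sub B (memR.1 hB).1
    · intro x hx
      obtain ⟨B, hB, _, hxB⟩ := mem_sup_filter.1 hx
      exact sub B (hS hB) hxB
    · intro x hx
      obtain ⟨B, hB, _, hxB⟩ := mem_sup_filter.1 hx
      exact sub B (hS hB) hxB
    · intro x hx
      obtain ⟨B, ⟨hB, hxB⟩, _⟩ := ex x hx
      by_cases hBS : B ∈ S
      · rcases (hS1 B hBS).1 with hb | hb
        · exact .inl (mem_sup_filter.2 ⟨B, hBS, hb, hxB⟩)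
        · exact .inr (.inl (mem_sup_filter.2 ⟨B, hBS, hb, hxB⟩))
      · exact .inr (.inr ⟨B, memR.2 ⟨hB, hBS⟩, hxB⟩)
    · intro x hx hx'
      obtain ⟨B, hB, hb, hxB⟩ := mem_sup_filter.1 hx
      obtain ⟨C, hC, hc, hxC⟩ := mem_sup_filter.1 hx'
      have := uniq B (hS hB) C (hS hC) x hxB hxC
      subst this
      exact (hS1 B hB).2 ⟨hb, hc⟩
    · intro B hB x hx hx'
      obtain ⟨C, hC, hc, hxC⟩ := mem_sup_filter.1 hx'
      have := uniq B (memR.1 hB).1 C (hS hC) x hx hxC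
      subst this
      exact (memR.1 hB).2 hC
    · intro B hB x hx hx'
      obtain ⟨C, hC, hc, hxC⟩ := mem_sup_filter.1 hx'
      have := uniq B (memR.1 hB).1 C (hS hC) x hx hxC
      subst this
      exact (memR.1 hB).2 hC
    · intro B hB C hC
      exact uniq B (memR.1 hB).1 C (memR.1 hC).1
    · intro y hy x hx hc
      obtain ⟨B, hB, hb, hyB⟩ := mem_sup_filter.1 hy
      exact mem_sup_filter.2 ⟨B, hB, hb, hb y hyB x hx hc⟩
    · intro y hy x hx hc
      obtain ⟨B, hB, hb, hyB⟩ := mem_sup_filter.1 hy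
      exact mem_sup_filter.2 ⟨B, hB, hb, hb y hyB x hx hc⟩
    · intro B hB; exact conn B (memR.1 hB).1
    · exact compat_sub (fun B hB => (memR.1 hB).1) (fun _ _ _ _ _ _ _ _ h => h) comp
  · show (P \ S).card + 2 = k
    have := Finset.card_sdiff_add_card_eq_card hS
    omega
  · have h1g : 1 ∈ crownGround n := mg.2 (by omega)
    rintro (he | he)
    · simp only [toT, Prod.mk.injEq] at he
      have hall : ∀ x ∈ crownGround n, ∃ B ∈ S, DownC n B ∧ x ∈ B := by
        intro x hx
        rw [← he.2.1] at hx
        exact mem_sup_filter.1 hx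
      obtain ⟨B, hB, hb, h1B⟩ := hall 1 h1g
      refine (hS1 B hB).2 ⟨hb, ?_⟩
      intro x hx y hy hc
      obtain ⟨C, hC, hc', hyC⟩ := hall y hy
      rw [hsep.1 B hB hb C hC hc' x hx y hyC (.inl ((cadj _ _ _).2 (.inl hc)))]
      exact hyC
    · simp only [Set.mem_singleton_iff, toT, Prod.mk.injEq] at he
      have hall : ∀ x ∈ crownGround n, ∃ B ∈ S, UpC n B ∧ x ∈ B := by
        intro x hx
        rw [← he.2.2] at hx
        exact mem_sup_filter.1 hx
      obtain ⟨B, hB, hb, h1B⟩ := hall 1 h1g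
      refine (hS1 B hB).2 ⟨?_, hb⟩
      intro x hx y hy hc
      obtain ⟨C, hC, hc', hyC⟩ := hall y hy
      rw [hsep.2 B hB hb C hC hc' x hx y hyC (.inl ((cadj _ _ _).2 (.inr hc)))]
      exact hyC

theorem img_sup (n k : ℕ) (hn : 2 ≤ n) (hk : 2 ≤ k) : TT n k \ exc n ⊆ toT n '' Ak n k := by
  classical
  rintro ⟨R, D, U⟩ ⟨⟨h, hcard⟩, hexc⟩
  dsimp only at h hcard
  have hD : D ≠ crownGround n := by
    rintro rfl
    apply hexc
    left
    have hR : R = ∅ := by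
      rw [Finset.eq_empty_iff_forall_notMem]
      intro B hB
      obtain ⟨x, hx⟩ := h.ne B hB
      exact h.RD B hB x hx (h.Rg B hB hx)
    have hU : U = ∅ := by
      rw [Finset.eq_empty_iff_forall_notMem]
      intro x hx
      exact h.DU x (h.Ug hx) hx
    rw [hR, hU]
  have hU : U ≠ crownGround n := by
    rintro rfl
    apply hexc
    right
    have hR : R = ∅ := by
      rw [Finset.eq_empty_iff_forall_notMem]
      intro B hB
      obtain ⟨x, hx⟩ := h.ne B hB
      exact h.RU B hB x hx (h.Rg B hB hx)
    have hD : D = ∅ := by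
      rw [Finset.eq_empty_iff_forall_notMem]
      intro x hx
      exact h.DU x hx (h.Dg hx)
    rw [hR, hD]
    rfl
  obtain ⟨G, hG⟩ : ∃ G, G = compGraph (crownLe n) := ⟨_, rfl⟩
  have kD : ∀ B ∈ cmps G D, Odd B.card ∧ DownC n B ∧ ¬ UpC n B := by
    intro B hB
    have hd := cmps_down h.dn (hG ▸ hB)
    have := parity_key n hn B ((cmps_sub hB).trans h.Dg) (by
      rintro rfl; exact hD (h.Dg.antisymm (cmps_sub hB))) (hG ▸ cmps_conn hB)
    exact ⟨this.1.2 (.inl hd), hd, fun hu => this.2 ⟨hd, hu⟩⟩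
  have kU : ∀ B ∈ cmps G U, Odd B.card ∧ UpC n B ∧ ¬ DownC n B := by
    intro B hB
    have hd := cmps_up h.up (hG ▸ hB)
    have := parity_key n hn B ((cmps_sub hB).trans h.Ug) (by
      rintro rfl; exact hU (h.Ug.antisymm (cmps_sub hB))) (hG ▸ cmps_conn hB)
    exact ⟨this.1.2 (.inr hd), hd, fun hu => this.2 ⟨hu, hd⟩⟩
  have nD : ∀ {E : Finset ℕ}, ∀ B ∈ cmps G E, B.Nonempty :=
    fun B hB => ((bc_iff _ _).1 (cmps_conn hB)).1
  obtain ⟨S, hSdef⟩ : ∃ S, S = cmps G D ∪ cmps G U := ⟨_, rfl⟩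
  have mS : ∀ {B}, B ∈ S ↔ B ∈ cmps G D ∨ B ∈ cmps G U := by
    intro B; rw [hSdef, Finset.mem_union]
  have dis : Disjoint R S := by
    rw [Finset.disjoint_left]
    intro B hB hBS
    obtain ⟨x, hx⟩ := h.ne B hB
    rcases mS.1 hBS with hb | hb
    · exact h.RD B hB x hx (cmps_sub hb hx)
    · exact h.RU B hB x hx (cmps_sub hb hx)
  have mP : ∀ {B}, B ∈ R ∪ S ↔ B ∈ R ∨ B ∈ cmps G D ∨ B ∈ cmps G U := by
    intro B; rw [Finset.mem_union, mS]
  have sub : ∀ B ∈ R ∪ S, B ⊆ crownGround n := by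
    intro B hB
    rcases mP.1 hB with hB | hB | hB
    · exact h.Rg B hB
    · exact (cmps_sub hB).trans h.Dg
    · exact (cmps_sub hB).trans h.Ug
  have uniq : ∀ B ∈ R ∪ S, ∀ C ∈ R ∪ S, ∀ x ∈ B, x ∈ C → B = C := by
    intro B hB C hC x hx hx'
    rcases mP.1 hB with hB | hB | hB <;> rcases mP.1 hC with hC | hC | hC
    · exact h.RR B hB C hC x hx hx'
    · exact (h.RD B hB x hx (cmps_sub hC hx')).elim
    · exact (h.RU B hB x hx (cmps_sub hC hx')).elim
    · exact (h.RD C hC x hx' (cmps_sub hB hx)).elim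
    · exact cmps_uniq hB hC hx hx'
    · exact (h.DU x (cmps_sub hB hx) (cmps_sub hC hx')).elim
    · exact (h.RU C hC x hx' (cmps_sub hB hx)).elim
    · exact (h.DU x (cmps_sub hC hx') (cmps_sub hB hx)).elim
    · exact cmps_uniq hB hC hx hx'
  refine ⟨(R ∪ S, S), ⟨⟨⟨⟨?_, sub, ?_⟩, ?_⟩, ?_⟩, Finset.subset_union_right, ?_, ?_⟩, ?_⟩
  · intro B hB
    rcases mP.1 hB with hB | hB | hB
    · exact h.ne B hB
    · exact nD B hB
    · exact nD B hB
  · intro x hx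
    have : ∃ B ∈ R ∪ S, x ∈ B := by
      rcases h.cov x hx with hh | hh | ⟨B, hB, hh⟩
      · obtain ⟨B, hB, hxB⟩ := cmps_cover (G := G) hh
        exact ⟨B, mP.2 (.inr (.inl hB)), hxB⟩
      · obtain ⟨B, hB, hxB⟩ := cmps_cover (G := G) hh
        exact ⟨B, mP.2 (.inr (.inr hB)), hxB⟩
      · exact ⟨B, mP.2 (.inl hB), hh⟩
    obtain ⟨B, hB, hxB⟩ := this
    exact ⟨B, ⟨hB, hxB⟩, fun C hC => uniq C hC.1 B hB x hC.2 hxB⟩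
  · intro B hB
    rcases mP.1 hB with hB | hB | hB
    · exact h.conn B hB
    · exact hG ▸ cmps_conn hB
    · exact hG ▸ cmps_conn hB
  · refine compat_transfer (K := R) (le' := crownLe n) ?_ (fun _ _ _ _ _ _ _ _ h => h) h.compat
    intro B hB
    rcases mP.1 hB with hB' | hB' | hB'
    · exact .inl hB'
    · right; left
      rintro C ⟨hC, _, x, hx, y, hy, rfl | hxy⟩
      · exact uniq C hC B hB x hx hy
      · exact uniq C hC B hB x hx ((kD B hB').2.1 y hy x (sub C hC hx) hxy)
    · right; right
      rintro C ⟨_, hC, x, hx, y, hy, rfl | hxy⟩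
      · exact uniq C hC B hB x hy hx
      · exact uniq C hC B hB y hy ((kU B hB').2.1 x hx y (sub C hC hy) hxy)
  · intro B hB
    rcases mS.1 hB with hB | hB
    · exact (kD B hB).1
    · exact (kU B hB).1
  · show (R ∪ S).card = S.card + (k - 2)
    rw [Finset.card_union_of_disjoint dis]
    omega
  · have e1 : (R ∪ S) \ S = R := Finset.union_sdiff_cancel_right dis
    have e2 : S.filter (DownC n) = cmps G D := by
      ext B
      rw [Finset.mem_filter, mS]
      constructor
      · rintro ⟨hB | hB, hb⟩
        · exact hB
        · exact absurd hb (kU B hB).2.2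
      · intro hB; exact ⟨.inl hB, (kD B hB).2.1⟩
    have e3 : S.filter (UpC n) = cmps G U := by
      ext B
      rw [Finset.mem_filter, mS]
      constructor
      · rintro ⟨hB | hB, hb⟩
        · exact absurd hb (kD B hB).2.2
        · exact hB
      · intro hB; exact ⟨.inr hB, (kU B hB).2.1⟩
    simp only [toT, e1, Prod.mk.injEq, true_and]
    constructor
    · convert sup_cmps G D
    · convert sup_cmps G U

theorem hat_card (n k : ℕ) (hk : 2 ≤ k) : (hatCCPs n k).ncard = (TT n k).ncard := by
  rw [← (hat_sub n k).antisymm (hat_sup n k hk)]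
  exact Set.ncard_image_of_injOn (mk_injOn n k)

theorem ak_card (n k : ℕ) (hn : 2 ≤ n) (hk : 2 ≤ k) :
    (Ak n k).ncard = (TT n k \ exc n).ncard := by
  rw [← (img_sub n k hn hk).antisymm (img_sup n k hn hk)]
  exact (Set.ncard_image_of_injOn (toT_injOn n k hn)).symm

theorem exc_sub (n : ℕ) : exc n ⊆ TT n 2 := by
  rintro t (rfl | rfl)
  · refine ⟨?_, rfl⟩
    constructor <;> simp [DownC, UpC, IsCompatible]
    exact fun _ _ _ h _ => h
  · refine ⟨?_, rfl⟩
    constructor <;> simp [DownC, UpC, IsCompatible]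
    exact fun _ _ _ h _ => h

theorem TT2_fin (n : ℕ) : (TT n 2).Finite := by
  refine Set.Finite.subset (Finset.finite_toSet
    (({∅} : Finset (Finset (Finset ℕ))) ×ˢ (crownGround n).powerset ×ˢ (crownGround n).powerset)) ?_
  rintro ⟨R, D, U⟩ ⟨h, hc⟩
  dsimp only at h hc
  have : R = ∅ := Finset.card_eq_zero.1 (by omega)
  simp [this, h.Dg, h.Ug]

/-- Proposition 3.3 (ii) and (iii): for `k ≥ 3` the number of `k`-CCPs of
`Ĉ_{2n}` equals `|A_k|`, and the number of `2`-CCPs of `Ĉ_{2n}` is `|A_2| + 2`. -/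
theorem hatCCP_count (n : ℕ) (hn : 2 ≤ n) :
    (∀ k, 3 ≤ k → (hatCCPs n k).ncard = (Ak n k).ncard) ∧
      (hatCCPs n 2).ncard = (Ak n 2).ncard + 2 := by
  constructor
  · intro k hk
    rw [hat_card n k (by omega), ak_card n k hn (by omega)]
    congr 1
    symm
    rw [sdiff_eq_left, Set.disjoint_left]
    rintro t ⟨_, h1⟩ (rfl | rfl)
    · simp at h1; omega
    · simp at h1; omega
  · rw [hat_card n 2 le_rfl, ak_card n 2 hn le_rfl]
    have h2 : (exc n).ncard = 2 := by
      unfold exc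
      apply Set.ncard_pair
      intro h
      simp only [Prod.mk.injEq] at h
      have h1 : 1 ∈ crownGround n := mg.2 (by omega)
      rw [h.2.1] at h1
      simp at h1
    rw [← Set.ncard_sdiff_add_ncard_of_subset (exc_sub n) (TT2_fin n), h2]
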